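/- (Theorem: split error identity.) Assume the nonlinear DWR setting below with nested subspaces X_h ⊆ X_k ⊆ X, continuous solutions (u,z), semidiscrete solutions (u_k,z_k) in X_k, and fully discrete solutions (u_kh,z_kh) in X_h. Then J(u) − J(u_kh) = (J(u) − J(u_k)) + (J(u_k) − J(u_kh)), with the two representations J(u) − J(u_k) = (1/2)·ρ(u_k)(z − z_k) + (1/2)·ρ*(u_k,z_k)(u − u_k) + R_k and J(u_k) − J(u_kh) = (1/2)·ρ(u_kh)(z_k − z_kh) + (1/2)·ρ*(u_kh,z_kh)(u_k − u_kh) + R_h, where R_k := (1/2)·∫₀¹ D³L((u_k,z_k) + s·e_k)(e_k,e_k,e_k)·s·(s−1) ds with e_k := (u,z) − (u_k,z_k), and R_h := (1/2)·∫₀¹ D³L((u_kh,z_kh) + s·e_h)(e_h,e_h,e_h)·s·(s−1) ds with e_h := (u_k,z_k) − (u_kh,z_kh). -/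

import Mathlib

/-!
The Lagrangian `L` agrees with `J` at any pair satisfying its own primal equation, so each error
part is a difference `L y - L x`, that is, the integral of `s ↦ L'(x + s e)(e)` over `[0, 1]`
with `e = y - x`.  The trapezoidal rule with its Peano remainder (`sub_eq_trapezoid`) turns this
into `(L'(x)(e) + L'(y)(e)) / 2` plus the cubic remainder.  By the primal and adjoint equations
(Galerkin orthogonality on the larger space, which contains the components of `e`), `L'(y)(e) = 0`,
while `L'(x)(e)` is the sum of the primal and adjoint residuals (`fderiv_lagrangian`).
`dwr_identity` combines these and is applied once to each of the two consecutive levels.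
-/

lemma hasDerivAt_iteratedFDeriv_line {E : Type*} [NormedAddCommGroup E] [NormedSpace ℝ E]
    {L : E → ℝ} (hL : ContDiff ℝ 3 L) (x e : E) (n : ℕ) (hn : n < 3) (s : ℝ) :
    HasDerivAt (fun s : ℝ => iteratedFDeriv ℝ n L (x + s • e) (fun _ => e))
      (iteratedFDeriv ℝ (n + 1) L (x + s • e) (fun _ => e)) s := by
  have hd : DifferentiableAt ℝ (iteratedFDeriv ℝ n L) (x + s • e) :=
    (hL.differentiable_iteratedFDeriv (by exact_mod_cast hn)) _
  have hline : HasDerivAt (fun s : ℝ => x + s • e) e s := by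
    simpa using ((hasDerivAt_id s).smul_const e).const_add x
  have h1 := hd.hasFDerivAt.comp_hasDerivAt s hline
  have h2 := (ContinuousMultilinearMap.apply ℝ (fun _ : Fin n => E) ℝ
    (fun _ => e)).hasFDerivAt.comp_hasDerivAt s h1
  exact h2

/-- The trapezoidal rule for `∫₀¹ L'(x + s e)(e) ds`, with integral remainder. -/
lemma sub_eq_trapezoid {E : Type*} [NormedAddCommGroup E] [NormedSpace ℝ E]
    {L : E → ℝ} (hL : ContDiff ℝ 3 L) (x e : E) :
    L (x + e) - L x = (1 / 2) * (fderiv ℝ L x e + fderiv ℝ L (x + e) e)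
      + (1 / 2) * ∫ s in (0 : ℝ)..1,
          (iteratedFDeriv ℝ 3 L (x + s • e) (fun _ => e)) * s * (s - 1) := by
  have h := hasDerivAt_iteratedFDeriv_line hL x e
  have hcont : Continuous fun s : ℝ =>
      (iteratedFDeriv ℝ 3 L (x + s • e) (fun _ => e)) * s * (s - 1) := by
    have h3 : Continuous (iteratedFDeriv ℝ 3 L) := hL.continuous_iteratedFDeriv (by norm_num)
    have h4 : Continuous fun s : ℝ => iteratedFDeriv ℝ 3 L (x + s • e) (fun _ => e) :=
      (ContinuousMultilinearMap.apply ℝ (fun _ : Fin 3 => E) ℝ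
        (fun _ => e)).continuous.comp (h3.comp (by fun_prop))
    fun_prop
  -- With `g s = L (x + s e)` and `g₁, g₂, g₃` its derivatives, an antiderivative of
  -- `g₃ s (s - 1)` is `g₂ s (s - 1) - g₁ (2 s - 1) + 2 g`.
  have key := intervalIntegral.integral_eq_sub_of_hasDerivAt (a := 0) (b := 1)
    (f := fun s : ℝ => iteratedFDeriv ℝ 2 L (x + s • e) (fun _ => e) * (s * (s - 1))
      - iteratedFDeriv ℝ 1 L (x + s • e) (fun _ => e) * (2 * s - 1)
      + 2 * iteratedFDeriv ℝ 0 L (x + s • e) (fun _ => e))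
    (f' := fun s : ℝ => (iteratedFDeriv ℝ 3 L (x + s • e) (fun _ => e)) * s * (s - 1))
    (fun s _ => by
      have p1 : HasDerivAt (fun s : ℝ => s * (s - 1)) (1 * (s - 1) + s * 1) s :=
        (hasDerivAt_id s).mul ((hasDerivAt_id s).sub_const 1)
      have p2 : HasDerivAt (fun s : ℝ => 2 * s - 1) (2 * 1) s :=
        ((hasDerivAt_id s).const_mul 2).sub_const 1
      refine ((((h 2 (by norm_num) s).mul p1).sub ((h 1 (by norm_num) s).mul p2)).add
        ((h 0 (by norm_num) s).const_mul 2)).congr_deriv ?_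
      norm_num only
      ring)
    (hcont.intervalIntegrable _ _)
  rw [key]
  simp only [iteratedFDeriv_one_apply, iteratedFDeriv_zero_apply, zero_smul, one_smul, add_zero]
  ring

/-- The derivative of the Lagrangian splits into adjoint and primal residuals.  Differentiability
of `J` and `A(·, w)` follows from that of `L`, since `J = L(·, 0)`. -/
lemma fderiv_lagrangian {X : Type*} [NormedAddCommGroup X] [NormedSpace ℝ X]
    (F : X →L[ℝ] ℝ) (J : X → ℝ) (A : X → X →L[ℝ] ℝ)
    (L : X × X → ℝ) (hLdef : ∀ v w : X, L (v, w) = J v - A v w + F w)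
    (hL : Differentiable ℝ L) (v w a b : X) :
    fderiv ℝ L (v, w) (a, b)
      = (fderiv ℝ J v a - fderiv ℝ (fun v => A v w) v a) + (F b - A v b) := by
  have hpart : ∀ w, Differentiable ℝ fun v => L (v, w) := fun w => by fun_prop
  have hJ : Differentiable ℝ J := by
    have : J = fun v => L (v, 0) := by funext v; simp [hLdef]
    rw [this]; exact hpart 0
  have hA : Differentiable ℝ fun v => A v w := by
    have : (fun v => A v w) = fun v => J v + F w - L (v, w) := by
      funext v; rw [hLdef]; ring
    rw [this]; exact (hJ.add_const _).sub (hpart w)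
  have h1 : fderiv ℝ L (v, w) (a, 0) = fderiv ℝ J v a - fderiv ℝ (fun v => A v w) v a := by
    have e1 : HasFDerivAt (fun v => L (v, w)) _ v :=
      HasFDerivAt.comp (g := L) v (hL (v, w)).hasFDerivAt (hasFDerivAt_prodMk_left (𝕜 := ℝ) v w)
    have e2 : HasFDerivAt (fun v => L (v, w)) (fderiv ℝ J v - fderiv ℝ (fun v => A v w) v) v := by
      simp only [hLdef]
      exact ((hJ v).hasFDerivAt.sub (hA v).hasFDerivAt).add_const _
    simpa using congrArg (fun T : X →L[ℝ] ℝ => T a) (e1.unique e2)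
  have h2 : fderiv ℝ L (v, w) (0, b) = F b - A v b := by
    have e1 : HasFDerivAt (fun w => L (v, w)) _ w :=
      HasFDerivAt.comp (g := L) w (hL (v, w)).hasFDerivAt (hasFDerivAt_prodMk_right (𝕜 := ℝ) v w)
    have e2 : HasFDerivAt (fun w => L (v, w)) (-(A v) + F) w := by
      simp only [hLdef, sub_eq_add_neg]
      exact ((A v).hasFDerivAt.neg.const_add (J v)).add F.hasFDerivAt
    have e3 := congrArg (fun T : X →L[ℝ] ℝ => T b) (e1.unique e2)
    simp at e3
    linarith
  have hab : ((a, b) : X × X) = (a, 0) + (0, b) := by simp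
  rw [hab, map_add, h1, h2]

/-- Error representation between two levels: `(v, w)` is the finer pair, whose equations hold in
the direction of the difference to the coarser pair `(v₀, w₀)`. -/
lemma dwr_identity {X : Type*} [NormedAddCommGroup X] [NormedSpace ℝ X]
    (F : X →L[ℝ] ℝ) (J : X → ℝ) (A : X → X →L[ℝ] ℝ)
    (L : X × X → ℝ) (hLdef : ∀ v w : X, L (v, w) = J v - A v w + F w)
    (hL : ContDiff ℝ 3 L) (v w v₀ w₀ : X)
    (hw : A v w = F w) (hw₀ : A v₀ w₀ = F w₀) (hdiff : A v (w - w₀) = F (w - w₀))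
    (hadj : fderiv ℝ J v (v - v₀) = fderiv ℝ (fun v => A v w) v (v - v₀)) :
    J v - J v₀
        = (1 / 2) * (F (w - w₀) - A v₀ (w - w₀))
          + (1 / 2) * (fderiv ℝ J v₀ (v - v₀)
              - fderiv ℝ (fun v => A v w₀) v₀ (v - v₀))
          + (1 / 2) * ∫ s in (0 : ℝ)..1,
              (iteratedFDeriv ℝ 3 L ((v₀, w₀) + s • ((v, w) - (v₀, w₀)))
                (fun _ => (v, w) - (v₀, w₀))) * s * (s - 1) := by
  have hd : Differentiable ℝ L := hL.differentiable (by norm_num)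
  have ht := sub_eq_trapezoid hL (v₀, w₀) ((v, w) - (v₀, w₀))
  have hx := fderiv_lagrangian F J A L hLdef hd v₀ w₀ (v - v₀) (w - w₀)
  have hy := fderiv_lagrangian F J A L hLdef hd v w (v - v₀) (w - w₀)
  rw [← Prod.mk_sub_mk] at hx hy
  rw [add_sub_cancel, hx, hy, hLdef, hLdef, hw, hw₀, hdiff, hadj] at ht
  linarith

/-- Split error identity of the dual-weighted residual method (nonlinear setting):
the total error splits as `J(u) − J(u_kh) = (J(u) − J(u_k)) + (J(u_k) − J(u_kh))`,
where each part admits a DWR representation with half primal residual, half adjoint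
residual and a cubic remainder term built from the third derivative of the
Lagrangian `L(v,w) = J(v) − A(v,w) + F(w)`. -/
theorem split_error_identity
    {X : Type*} [NormedAddCommGroup X] [NormedSpace ℝ X]
    (Xh Xk : Submodule ℝ X) (hXhk : Xh ≤ Xk)
    (F : X →L[ℝ] ℝ) (J : X → ℝ) (A : X → X →L[ℝ] ℝ)
    (L : X × X → ℝ) (hLdef : ∀ v w : X, L (v, w) = J v - A v w + F w)
    (hL : ContDiff ℝ 3 L)
    (u z uk zk ukh zkh : X)
    (hu : ∀ φ : X, A u φ = F φ)
    (hz : ∀ ψ : X, fderiv ℝ J u ψ = fderiv ℝ (fun v => A v z) u ψ)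
    (huk : uk ∈ Xk) (hzk : zk ∈ Xk)
    (huk_sol : ∀ φk ∈ Xk, A uk φk = F φk)
    (hzk_sol : ∀ ψk ∈ Xk, fderiv ℝ J uk ψk = fderiv ℝ (fun v => A v zk) uk ψk)
    (hukh : ukh ∈ Xh) (hzkh : zkh ∈ Xh)
    (hukh_sol : ∀ φh ∈ Xh, A ukh φh = F φh)
    (hzkh_sol : ∀ ψh ∈ Xh, fderiv ℝ J ukh ψh = fderiv ℝ (fun v => A v zkh) ukh ψh)
    (ek eh : X × X) (hek : ek = (u, z) - (uk, zk)) (heh : eh = (uk, zk) - (ukh, zkh)) :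
    J u - J ukh = (J u - J uk) + (J uk - J ukh)
    ∧ J u - J uk
        = (1 / 2) * (F (z - zk) - A uk (z - zk))
          + (1 / 2) * (fderiv ℝ J uk (u - uk)
              - fderiv ℝ (fun v => A v zk) uk (u - uk))
          + (1 / 2) * ∫ s in (0 : ℝ)..1,
              (iteratedFDeriv ℝ 3 L ((uk, zk) + s • ek) (fun _ => ek)) * s * (s - 1)
    ∧ J uk - J ukh
        = (1 / 2) * (F (zk - zkh) - A ukh (zk - zkh))
          + (1 / 2) * (fderiv ℝ J ukh (uk - ukh)
              - fderiv ℝ (fun v => A v zkh) ukh (uk - ukh))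
          + (1 / 2) * ∫ s in (0 : ℝ)..1,
              (iteratedFDeriv ℝ 3 L ((ukh, zkh) + s • eh) (fun _ => eh)) * s * (s - 1) := by
  subst hek heh
  refine ⟨by ring, ?_, ?_⟩
  · exact dwr_identity F J A L hLdef hL u z uk zk (hu z) (huk_sol zk hzk) (hu _) (hz _)
  · exact dwr_identity F J A L hLdef hL uk zk ukh zkh (huk_sol zk hzk) (hukh_sol zkh hzkh)
      (huk_sol _ (Xk.sub_mem hzk (hXhk hzkh))) (hzk_sol _ (Xk.sub_mem huk (hXhk hukh)))
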